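/- For every ε > 0 there exists n0 such that the following holds for every n ≥ n0. Let L and L' be simple graphs on the same n-element vertex set with e(L) ≥ (5/9 + ε)·binom(n,2) and e(L') ≥ (5/9)·binom(n,2). Let C be a connected component of L containing the maximum number of edges among the components of L, and let C' be a connected component of L' containing the maximum number of edges among the components of L'. Then C and C' have an edge in common: there exist vertices u, v with u, v ∈ C, u, v ∈ C', and {u, v} an edge of both L and L'. -/

import Mathlib

/-- The set of edges of `G` with both endpoints in the connected component `C`. -/
def compEdges {V : Type*} (G : SimpleGraph V) (C : G.ConnectedComponent) : Set (Sym2 V) :=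
  {e | e ∈ G.edgeSet ∧ ∀ x ∈ e, G.connectedComponentMk x = C}

/-!
If a graph has at least `5/9` of all possible edges, then an edge-maximal component `C` contains at
least two thirds of the vertices. Every component `D` has at most `|D| (|C| - 1) / 2` edges, by
counting pairs inside `D` when `|D| ≤ |C|` and by maximality of `C` when `|D| > |C|`. Summing over
`D` makes `|C|` at least `5n/9`, and this is improved to `2n/3` because outside `C` there are at
most `binom(n - |C|, 2)` edges while `(2/3)² + (1/3)² = 5/9`.

If two such components `C` and `C'` had no common edge, the pairs inside `C ∩ C'` could be used only
once. With `x` and `y` vertices outside `C` and `C'`, the two graphs would then have at most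
`(n² - n + (x - y)² - (x + y)) / 2` edges together. Since `x, y ≤ n/3`, this is less than
`(10/9) binom(n, 2)`.
-/

section Pairs

variable {α : Type*} {s t : Set α}

lemma ncard_sym2_sdiff_diagSet (hs : s.Finite) :
    (s.sym2 \ Sym2.diagSet).ncard = s.ncard.choose 2 := by
  classical
  lift s to Finset α using hs
  have offDiag_image : (s : Set α).sym2 \ Sym2.diagSet =
      (s.offDiag.image Sym2.mk.uncurry : Finset (Sym2 α)) := by
    rw [Finset.coe_image, Finset.coe_offDiag]
    ext ⟨u, v⟩
    constructor
    · rintro ⟨⟨hu, hv⟩, huv⟩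
      exact ⟨(u, v), ⟨hu, hv, huv⟩, rfl⟩
    · rintro ⟨⟨a, b⟩, ⟨ha, hb, hab⟩, h⟩
      rw [← h]
      exact ⟨⟨ha, hb⟩, hab⟩
  rw [offDiag_image, Set.ncard_coe_finset, Set.ncard_coe_finset, Sym2.card_image_offDiag]

lemma ncard_add_ncard_add_choose_two_le [Finite α] {E F : Set (Sym2 α)}
    (hE : E ⊆ s.sym2 \ Sym2.diagSet) (hF : F ⊆ t.sym2 \ Sym2.diagSet) (hEF : Disjoint E F) :
    E.ncard + F.ncard + (s ∩ t).ncard.choose 2 ≤ s.ncard.choose 2 + t.ncard.choose 2 := by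
  have inter : (s.sym2 \ Sym2.diagSet) ∩ (t.sym2 \ Sym2.diagSet) =
      (s ∩ t).sym2 \ Sym2.diagSet := by
    rw [Set.sym2_inter, Set.sdiff_inter_distrib_right]
  calc E.ncard + F.ncard + (s ∩ t).ncard.choose 2
      = (E ∪ F).ncard + ((s.sym2 \ Sym2.diagSet) ∩ (t.sym2 \ Sym2.diagSet)).ncard := by
        rw [Set.ncard_union_eq hEF, inter, ncard_sym2_sdiff_diagSet (Set.toFinite _)]
    _ ≤ ((s.sym2 \ Sym2.diagSet) ∪ (t.sym2 \ Sym2.diagSet)).ncard +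
          ((s.sym2 \ Sym2.diagSet) ∩ (t.sym2 \ Sym2.diagSet)).ncard := by
        gcongr
        exact Set.toFinite _
    _ = s.ncard.choose 2 + t.ncard.choose 2 := by
        rw [Set.ncard_union_add_ncard_inter, ncard_sym2_sdiff_diagSet (Set.toFinite _),
          ncard_sym2_sdiff_diagSet (Set.toFinite _)]

end Pairs

section Components

variable {V : Type*} {G : SimpleGraph V} {C : G.ConnectedComponent}

lemma mk_mem_compEdges {u v : V} :
    s(u, v) ∈ compEdges G C ↔
      G.Adj u v ∧ G.connectedComponentMk u = C ∧ G.connectedComponentMk v = C := by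
  simp [compEdges]

lemma compEdges_subset_sym2_supp : compEdges G C ⊆ C.supp.sym2 \ Sym2.diagSet := by
  rintro ⟨u, v⟩ he
  obtain ⟨adj, hu, hv⟩ := mk_mem_compEdges.1 he
  exact ⟨⟨hu, hv⟩, adj.ne⟩

lemma edgeSet_subset_compEdges_union :
    G.edgeSet ⊆ compEdges G C ∪ (C.suppᶜ.sym2 \ Sym2.diagSet) := by
  rintro ⟨u, v⟩ adj
  have same_component := SimpleGraph.ConnectedComponent.connectedComponentMk_eq_of_adj adj
  by_cases hu : G.connectedComponentMk u = C
  · exact .inl (mk_mem_compEdges.2 ⟨adj, hu, same_component ▸ hu⟩)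
  · exact .inr ⟨⟨hu, fun hv => hu (same_component.trans hv)⟩, SimpleGraph.Adj.ne adj⟩

lemma iUnion_compEdges : ⋃ D, compEdges G D = G.edgeSet := by
  refine (Set.iUnion_subset fun D e he => he.1).antisymm ?_
  rintro ⟨u, v⟩ adj
  exact Set.mem_iUnion.2 ⟨G.connectedComponentMk u, mk_mem_compEdges.2
    ⟨adj, rfl, (SimpleGraph.ConnectedComponent.connectedComponentMk_eq_of_adj adj).symm⟩⟩

variable [Finite V]

lemma ncard_compEdges_le_choose_two : (compEdges G C).ncard ≤ C.supp.ncard.choose 2 :=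
  (Set.ncard_le_ncard compEdges_subset_sym2_supp).trans_eq
    (ncard_sym2_sdiff_diagSet (Set.toFinite _))

lemma ncard_edgeSet_le_ncard_compEdges_add (C : G.ConnectedComponent) :
    G.edgeSet.ncard ≤ (compEdges G C).ncard + C.suppᶜ.ncard.choose 2 := by
  rw [← ncard_sym2_sdiff_diagSet (Set.toFinite C.suppᶜ)]
  exact (Set.ncard_le_ncard edgeSet_subset_compEdges_union).trans (Set.ncard_union_le _ _)

lemma finsum_ncard_supp : ∑ᶠ D : G.ConnectedComponent, D.supp.ncard = Nat.card V := by
  rw [← Set.ncard_iUnion_of_finite (fun _ => Set.toFinite _)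
    G.pairwise_disjoint_supp_connectedComponent, G.iUnion_connectedComponentSupp, Set.ncard_univ]

lemma two_mul_ncard_compEdges_le (hC : ∀ D, (compEdges G D).ncard ≤ (compEdges G C).ncard)
    (D : G.ConnectedComponent) :
    2 * (compEdges G D).ncard ≤ D.supp.ncard * (C.supp.ncard - 1) := by
  have two_mul_choose_two (k : ℕ) : 2 * k.choose 2 = k * (k - 1) := by
    rw [Nat.choose_two_right, Nat.mul_div_cancel' k.even_mul_pred_self.two_dvd]
  rcases le_total D.supp.ncard C.supp.ncard with hDC | hCD
  · calc 2 * (compEdges G D).ncard ≤ 2 * D.supp.ncard.choose 2 := by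
          gcongr; exact ncard_compEdges_le_choose_two
      _ = D.supp.ncard * (D.supp.ncard - 1) := two_mul_choose_two _
      _ ≤ D.supp.ncard * (C.supp.ncard - 1) := by gcongr
  · calc 2 * (compEdges G D).ncard ≤ 2 * (compEdges G C).ncard := Nat.mul_le_mul_left 2 (hC D)
      _ ≤ 2 * C.supp.ncard.choose 2 := by gcongr; exact ncard_compEdges_le_choose_two
      _ = C.supp.ncard * (C.supp.ncard - 1) := two_mul_choose_two _
      _ ≤ D.supp.ncard * (C.supp.ncard - 1) := by gcongr

lemma two_mul_ncard_edgeSet_le (hC : ∀ D, (compEdges G D).ncard ≤ (compEdges G C).ncard) :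
    2 * G.edgeSet.ncard ≤ Nat.card V * (C.supp.ncard - 1) := by
  have := Fintype.ofFinite G.ConnectedComponent
  calc 2 * G.edgeSet.ncard ≤ 2 * ∑ D, (compEdges G D).ncard := by
        rw [← iUnion_compEdges]
        gcongr
        exact Set.ncard_iUnion_le_of_fintype _
    _ ≤ ∑ D : G.ConnectedComponent, D.supp.ncard * (C.supp.ncard - 1) := by
        rw [Finset.mul_sum]
        exact Finset.sum_le_sum fun D _ => two_mul_ncard_compEdges_le hC D
    _ = Nat.card V * (C.supp.ncard - 1) := by
        rw [← Finset.sum_mul, ← finsum_eq_sum_of_fintype, finsum_ncard_supp]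

/-- The density `r ^ 2 + (1 - r) ^ 2` is that of two disjoint cliques on `r * n` and `(1 - r) * n`
vertices. -/
lemma mul_card_le_ncard_supp {r : ℝ} (hr : 1 / 2 ≤ r) (hr' : r < 1)
    (hG : (r ^ 2 + (1 - r) ^ 2) * (Nat.card V).choose 2 ≤ (G.edgeSet.ncard : ℝ))
    (hC : ∀ D, (compEdges G D).ncard ≤ (compEdges G C).ncard) :
    r * Nat.card V ≤ C.supp.ncard := by
  have edges_le_mul : (2 * G.edgeSet.ncard : ℝ) ≤ Nat.card V * (C.supp.ncard - 1) := by
    have supp_pos : 1 ≤ C.supp.ncard := C.nonempty_supp.ncard_pos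
    exact_mod_cast two_mul_ncard_edgeSet_le hC
  have edges_le_choose : (G.edgeSet.ncard : ℝ) ≤ C.supp.ncard.choose 2 + C.suppᶜ.ncard.choose 2 :=
    mod_cast (ncard_edgeSet_le_ncard_compEdges_add C).trans
      (by gcongr; exact ncard_compEdges_le_choose_two)
  have card_pos : (0 : ℝ) < Nat.card V := by
    have := C.nonempty_supp.to_type
    exact_mod_cast Nat.card_pos
  have card_compl : (C.suppᶜ.ncard : ℝ) = Nat.card V - C.supp.ncard :=
    eq_sub_of_add_eq' (mod_cast Set.ncard_add_ncard_compl C.supp)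
  rw [Nat.cast_choose_two] at hG
  rw [Nat.cast_choose_two, Nat.cast_choose_two, card_compl] at edges_le_choose
  set n : ℝ := (Nat.card V : ℝ)
  set c : ℝ := (C.supp.ncard : ℝ)
  set density : ℝ := r ^ 2 + (1 - r) ^ 2 with density_def
  have density_lt_one : density < 1 := by nlinarith [density_def]
  have one_sub_le_density : 1 - r ≤ density := by nlinarith [density_def]
  have density_mul_le : density * (n - 1) ≤ c - 1 := by
    refine le_of_mul_le_mul_left ?_ card_pos
    linarith
  have one_sub_mul_lt : (1 - r) * n < c := by
    linarith [mul_le_mul_of_nonneg_right one_sub_le_density card_pos.le]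
  by_contra! lt_mul
  have sum_sq_lt : c ^ 2 + (n - c) ^ 2 < density * n ^ 2 := by
    linear_combination 2 * mul_pos (sub_pos.2 lt_mul) (sub_pos.2 one_sub_mul_lt)
  linarith [mul_lt_of_lt_one_left card_pos density_lt_one]

lemma three_mul_ncard_compl_supp_le (hG : (5 / 9 : ℝ) * (Nat.card V).choose 2 ≤ G.edgeSet.ncard)
    (hC : ∀ D, (compEdges G D).ncard ≤ (compEdges G C).ncard) :
    3 * C.suppᶜ.ncard ≤ Nat.card V := by
  have two_thirds_le : (2 / 3 : ℝ) * Nat.card V ≤ C.supp.ncard :=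
    mul_card_le_ncard_supp (by norm_num) (by norm_num) (by norm_num [hG]) hC
  have card_compl : (C.supp.ncard + C.suppᶜ.ncard : ℝ) = Nat.card V :=
    mod_cast Set.ncard_add_ncard_compl C.supp
  have : (3 * C.suppᶜ.ncard : ℝ) ≤ Nat.card V := by linarith
  exact_mod_cast this

end Components

/-- Here `x` and `y` stand for the numbers of vertices outside `C` and `C'`, and `w` for the
smallest size that `C ∩ C'` can then have. -/
lemma choose_two_add_choose_two_lt {x y w : ℕ} (hn : 2 ≤ x + y + w) (hx : 3 * x ≤ x + y + w)
    (hy : 3 * y ≤ x + y + w) :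
    ((y + w).choose 2 + x.choose 2 + ((x + w).choose 2 + y.choose 2) : ℝ) <
      10 / 9 * (x + y + w).choose 2 + w.choose 2 := by
  have three_mul_dist_le : 3 * |(x - y : ℝ)| ≤ x + y + w := by
    rify at hx hy
    rcases abs_cases (x - y : ℝ) with h | h <;> linarith
  have dist_le : |(x - y : ℝ)| ≤ x + y :=
    abs_sub_le_iff.2 ⟨by linarith [y.cast_nonneg (α := ℝ)], by linarith [x.cast_nonneg (α := ℝ)]⟩
  have dist_sq_lt :
      9 * (x - y : ℝ) ^ 2 < (x + y + w) * (x + y + w - 1) + 9 * (x + y) := by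
    rify at hn
    rw [← sq_abs]
    linarith [mul_nonneg (sub_nonneg.2 three_mul_dist_le) (sub_nonneg.2 hn),
      mul_nonneg (sub_nonneg.2 three_mul_dist_le) (abs_nonneg (x - y : ℝ)), abs_nonneg (x - y : ℝ)]
  simp only [Nat.cast_choose_two]
  push_cast
  linarith

lemma ncard_edgeSet_add_ncard_edgeSet_lt {V : Type*} [Finite V] [Nontrivial V]
    {G G' : SimpleGraph V} {C : G.ConnectedComponent} {C' : G'.ConnectedComponent}
    (hC : 3 * C.suppᶜ.ncard ≤ Nat.card V) (hC' : 3 * C'.suppᶜ.ncard ≤ Nat.card V)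
    (disj : Disjoint (compEdges G C) (compEdges G' C')) :
    (G.edgeSet.ncard + G'.edgeSet.ncard : ℝ) < 10 / 9 * (Nat.card V).choose 2 := by
  have two_le_card : 2 ≤ Nat.card V := Finite.one_lt_card
  have card_C : C.supp.ncard + C.suppᶜ.ncard = Nat.card V := Set.ncard_add_ncard_compl _
  have card_C' : C'.supp.ncard + C'.suppᶜ.ncard = Nat.card V := Set.ncard_add_ncard_compl _
  have pairs_le : (compEdges G C).ncard + (compEdges G' C').ncard +
      (C.supp ∩ C'.supp).ncard.choose 2 ≤ C.supp.ncard.choose 2 + C'.supp.ncard.choose 2 :=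
    ncard_add_ncard_add_choose_two_le compEdges_subset_sym2_supp compEdges_subset_sym2_supp disj
  have edges_le := ncard_edgeSet_le_ncard_compEdges_add C
  have edges_le' := ncard_edgeSet_le_ncard_compEdges_add C'
  obtain ⟨w, hw⟩ : ∃ w, Nat.card V = C.suppᶜ.ncard + C'.suppᶜ.ncard + w :=
    Nat.exists_eq_add_of_le (by lia)
  have inter_ge : w ≤ (C.supp ∩ C'.supp).ncard := by
    have union_le : (C.supp ∪ C'.supp).ncard ≤ Nat.card V := Set.ncard_le_card _
    have := Set.ncard_union_add_ncard_inter C.supp C'.supp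
    lia
  have inter_choose_ge := Nat.choose_le_choose 2 inter_ge
  have choose_lt := choose_two_add_choose_two_lt (hw ▸ two_le_card) (hw ▸ hC) (hw ▸ hC')
  rw [← hw, show C'.suppᶜ.ncard + w = C.supp.ncard by lia,
    show C.suppᶜ.ncard + w = C'.supp.ncard by lia] at choose_lt
  rify at pairs_le edges_le edges_le' inter_choose_ge
  linarith

theorem stmt_5_general {V : Type*} [Fintype V] [Nontrivial V] (G G' : SimpleGraph V)
    [Fintype G.edgeSet] [Fintype G'.edgeSet]
    (hG : (5 / 9 : ℝ) * (Fintype.card V).choose 2 ≤ G.edgeFinset.card)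
    (hG' : (5 / 9 : ℝ) * (Fintype.card V).choose 2 ≤ G'.edgeFinset.card)
    (C : G.ConnectedComponent) (C' : G'.ConnectedComponent)
    (hC : ∀ D : G.ConnectedComponent, (compEdges G D).ncard ≤ (compEdges G C).ncard)
    (hC' : ∀ D : G'.ConnectedComponent, (compEdges G' D).ncard ≤ (compEdges G' C').ncard) :
    ∃ u v : V, G.Adj u v ∧ G'.Adj u v ∧
      G.connectedComponentMk u = C ∧ G.connectedComponentMk v = C ∧
      G'.connectedComponentMk u = C' ∧ G'.connectedComponentMk v = C' := by
  rw [← Nat.card_eq_fintype_card, ← Set.ncard_coe_finset, SimpleGraph.coe_edgeFinset] at hG hG'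
  by_contra! no_common_edge
  have disj : Disjoint (compEdges G C) (compEdges G' C') := by
    refine Set.disjoint_left.2 fun e => e.ind fun u v he he' => ?_
    obtain ⟨adj, hu, hv⟩ := mk_mem_compEdges.1 he
    obtain ⟨adj', hu', hv'⟩ := mk_mem_compEdges.1 he'
    exact no_common_edge u v adj adj' hu hv hu' hv'
  have edges_lt := ncard_edgeSet_add_ncard_edgeSet_lt (three_mul_ncard_compl_supp_le hG hC)
    (three_mul_ncard_compl_supp_le hG' hC') disj
  linarith

/-- For every `ε > 0` there exists `n0` such that for every `n ≥ n0`, if `L`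
and `L'` are simple graphs on the same `n`-element vertex set with `e(L) ≥ (5/9 + ε)·C(n,2)`
and `e(L') ≥ (5/9)·C(n,2)`, and `C`, `C'` are connected components of `L`, `L'` respectively
with the maximum number of edges, then `C` and `C'` have an edge in common. -/
theorem stmt_5 (ε : ℝ) (hε : 0 < ε) : ∃ n0 : ℕ, ∀ n : ℕ, n0 ≤ n →
    ∀ (V : Type) [Fintype V] [DecidableEq V], Fintype.card V = n →
    ∀ (G G' : SimpleGraph V) [DecidableRel G.Adj] [DecidableRel G'.Adj],
      (5/9 + ε) * (n.choose 2 : ℝ) ≤ (G.edgeFinset.card : ℝ) →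
      (5/9 : ℝ) * (n.choose 2 : ℝ) ≤ (G'.edgeFinset.card : ℝ) →
      ∀ (C : G.ConnectedComponent) (C' : G'.ConnectedComponent),
        (∀ D : G.ConnectedComponent, (compEdges G D).ncard ≤ (compEdges G C).ncard) →
        (∀ D : G'.ConnectedComponent, (compEdges G' D).ncard ≤ (compEdges G' C').ncard) →
        ∃ u v : V, G.Adj u v ∧ G'.Adj u v ∧
          G.connectedComponentMk u = C ∧ G.connectedComponentMk v = C ∧
          G'.connectedComponentMk u = C' ∧ G'.connectedComponentMk v = C' := by
  refine ⟨2, fun n hn V _ _ hV G G' _ _ hG hG' C C' hC hC' => ?_⟩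
  subst hV
  have : Nontrivial V := Fintype.one_lt_card_iff_nontrivial.1 hn
  refine stmt_5_general G G' (le_trans ?_ hG) hG' C C' hC hC'
  gcongr
  linarith
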